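/- arXiv:2507.02540 — 3 statements merged into one kernel-verified Lean document; each statement's English description precedes it below -/
import Mathlib

section
/- The characteristic distribution of a pure state is a probability distribution: for every natural number n and every unit vector ψ : (Fin n → Fin 2) → ℂ (i.e., star ψ ⬝ᵥ ψ = 1), the sum over all s : Fin n → Fin 4 of d⁻¹ · (Re⟨ψ, P_s ψ⟩)² equals 1, where ⟨ψ, P_s ψ⟩ = star ψ ⬝ᵥ P_s.mulVec ψ and d = 2^n. (Each summand is manifestly nonnegative.) -/
open Complex Matrix BigOperators

/-- The single-qubit Pauli matrices `Q₀ = 1`, `Q₁ = X`, `Q₂ = Y`, `Q₃ = Z`. -/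
noncomputable def Q : Fin 4 → Matrix (Fin 2) (Fin 2) ℂ :=
  ![1, !![0, 1; 1, 0], !![0, -Complex.I; Complex.I, 0], !![1, 0; 0, -1]]

/-- The `n`-qubit Pauli string `P_s`, the Kronecker product of the `Q (s k)`. -/
noncomputable def P {n : ℕ} (s : Fin n → Fin 4) :
    Matrix (Fin n → Fin 2) (Fin n → Fin 2) ℂ :=
  Matrix.of fun i j => ∏ k, Q (s k) (i k) (j k)

lemma Q_swap (a : Fin 4) (i j : Fin 2) : star (Q a i j) = Q a j i := by
  fin_cases a <;> fin_cases i <;> fin_cases j <;> simp [Q]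

lemma Q_sum (i j k l : Fin 2) :
    ∑ a, Q a i j * Q a k l = if i = l ∧ j = k then 2 else 0 := by
  fin_cases i <;> fin_cases j <;> fin_cases k <;> fin_cases l <;>
    simp [Q, Fin.sum_univ_four] <;> norm_num

lemma P_sum {n : ℕ} (i j k l : Fin n → Fin 2) :
    ∑ s : Fin n → Fin 4, P s i j * P s k l = if i = l ∧ j = k then 2 ^ n else 0 := by
  simp only [P, Matrix.of_apply, ← Finset.prod_mul_distrib]
  rw [← Fintype.prod_sum (fun (m : Fin n) (a : Fin 4) => Q a (i m) (j m) * Q a (k m) (l m))]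
  simp only [Q_sum]
  split_ifs with h
  · obtain ⟨rfl, rfl⟩ := h
    simp
  · have : ∃ m, ¬ (i m = l m ∧ j m = k m) := by
      by_contra hc
      push Not at hc
      exact h ⟨funext fun m => (hc m).1, funext fun m => (hc m).2⟩
    obtain ⟨m, hm⟩ := this
    exact Finset.prod_eq_zero (Finset.mem_univ m) (if_neg hm)

lemma exp_eq {n : ℕ} (ψ : (Fin n → Fin 2) → ℂ) (s : Fin n → Fin 4) :
    star ψ ⬝ᵥ (P s).mulVec ψ = ∑ i, ∑ j, star (ψ i) * ψ j * P s i j := by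
  simp only [dotProduct, Matrix.mulVec, Finset.mul_sum, Pi.star_apply]
  exact Finset.sum_congr rfl fun i _ => Finset.sum_congr rfl fun j _ => by ring

lemma exp_real {n : ℕ} (ψ : (Fin n → Fin 2) → ℂ) (s : Fin n → Fin 4) :
    (((star ψ ⬝ᵥ (P s).mulVec ψ).re : ℝ) : ℂ) = star ψ ⬝ᵥ (P s).mulVec ψ := by
  rw [← Complex.conj_eq_iff_re, exp_eq, map_sum]
  simp only [map_sum]
  rw [Finset.sum_comm]
  refine Finset.sum_congr rfl fun i _ => Finset.sum_congr rfl fun j _ => ?_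
  have h : (starRingEnd ℂ) (P s j i) = P s i j := by
    simp only [P, Matrix.of_apply, map_prod]
    exact Finset.prod_congr rfl fun m _ => Q_swap _ _ _
  simp only [map_mul, h, starRingEnd_apply, star_star]
  ring

lemma pauli_exp_sum {n : ℕ} (ψ : (Fin n → Fin 2) → ℂ) :
    ∑ s : Fin n → Fin 4, (star ψ ⬝ᵥ (P s).mulVec ψ) ^ 2 = 2 ^ n * (star ψ ⬝ᵥ ψ) ^ 2 := by
  have h1 : ∀ s : Fin n → Fin 4, (star ψ ⬝ᵥ (P s).mulVec ψ) ^ 2 =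
      ∑ i, ∑ j, ∑ k, ∑ l, (star (ψ i) * ψ j * (star (ψ k) * ψ l)) * (P s i j * P s k l) := by
    intro s
    rw [exp_eq, sq, Finset.sum_mul]
    refine Finset.sum_congr rfl fun i _ => ?_
    rw [Finset.sum_mul]
    refine Finset.sum_congr rfl fun j _ => ?_
    rw [Finset.mul_sum]
    refine Finset.sum_congr rfl fun k _ => ?_
    rw [Finset.mul_sum]
    exact Finset.sum_congr rfl fun l _ => by ring
  simp only [h1]
  have h2 : ∀ i j : Fin n → Fin 2, ∑ s : Fin n → Fin 4, ∑ k, ∑ l,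
      (star (ψ i) * ψ j * (star (ψ k) * ψ l)) * (P s i j * P s k l) =
      2 ^ n * ((star (ψ i) * ψ i) * (star (ψ j) * ψ j)) := by
    intro i j
    rw [Finset.sum_comm]
    have h3 : ∀ k : Fin n → Fin 2, ∑ s : Fin n → Fin 4, ∑ l,
      (star (ψ i) * ψ j * (star (ψ k) * ψ l)) * (P s i j * P s k l) =
      if j = k then 2 ^ n * ((star (ψ i) * ψ i) * (star (ψ j) * ψ j)) else 0 := by
      intro k
      rw [Finset.sum_comm]
      simp only [← Finset.mul_sum, P_sum, ite_and]
      simp only [mul_ite, mul_zero, Finset.sum_ite_eq, Finset.mem_univ, if_true]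
      split_ifs with h
      · subst h; ring
      · rfl
    simp only [h3, Finset.sum_ite_eq, Finset.mem_univ, if_true]
  rw [Finset.sum_comm]
  simp only [dotProduct, Pi.star_apply]
  rw [sq, Finset.sum_mul_sum, Finset.mul_sum]
  refine Finset.sum_congr rfl fun i _ => ?_
  rw [Finset.sum_comm, Finset.mul_sum]
  exact Finset.sum_congr rfl fun j _ => h2 i j

theorem characteristic_distribution_sums_to_one (n : ℕ) (ψ : (Fin n → Fin 2) → ℂ)
    (hψ : star ψ ⬝ᵥ ψ = 1) :
    ∑ s : Fin n → Fin 4, (2 ^ n : ℝ)⁻¹ * (star ψ ⬝ᵥ (P s).mulVec ψ).re ^ 2 = 1 := by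
  rw [← Finset.mul_sum]
  have h : ((∑ s : Fin n → Fin 4, (star ψ ⬝ᵥ (P s).mulVec ψ).re ^ 2 : ℝ) : ℂ) = 2 ^ n := by
    push_cast
    simp only [exp_real, pauli_exp_sum, hψ]
    simp
  have h' : (∑ s : Fin n → Fin 4, (star ψ ⬝ᵥ (P s).mulVec ψ).re ^ 2 : ℝ) = 2 ^ n := by
    exact_mod_cast h
  rw [h']
  exact inv_mul_cancel₀ (by positivity)
end

section
/- Tracing out one copy of the channel output reproduces the channel on one fewer copy: for every natural number n, every natural number α' ≥ 1 and α = α' + 1, and every unit vector ψ : (Fin n → Fin 2) → ℂ, the matrix τ indexed by (Fin α' → Fin n → Fin 2) with entries τ g g' = Σ over all b : Fin n → Fin 2 of ρ_α (Fin.cons b g) (Fin.cons b g') equals ρ_{α'}. -/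
open Complex Matrix BigOperators

/-- The channel output `E_P^α(|ψ⟩⟨ψ|^⊗α)`: each Pauli string applied with probability `d⁻²`
simultaneously to all `α` copies of `ψ`. -/
noncomputable def rho (n α : ℕ) (ψ : (Fin n → Fin 2) → ℂ) :
    Matrix (Fin α → Fin n → Fin 2) (Fin α → Fin n → Fin 2) ℂ :=
  Matrix.of fun f g => ((2 ^ n : ℂ) ^ 2)⁻¹ *
    ∑ s : Fin n → Fin 4, ∏ m, ((P s).mulVec ψ (f m) * (starRingEnd ℂ) ((P s).mulVec ψ (g m)))

lemma Q_unitary (a : Fin 4) (j j' : Fin 2) :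
    ∑ i, (starRingEnd ℂ) (Q a i j) * Q a i j' = (1 : Matrix (Fin 2) (Fin 2) ℂ) j j' := by
  fin_cases a <;> fin_cases j <;> fin_cases j' <;> simp [Q, Fin.sum_univ_two]

lemma P_unitary {n : ℕ} (s : Fin n → Fin 4) : (P s)ᴴ * P s = 1 := by
  ext j j'
  simp only [Matrix.mul_apply, Matrix.conjTranspose_apply, P, Matrix.of_apply]
  have h : ∀ i : Fin n → Fin 2,
      star (∏ k, Q (s k) (i k) (j k)) * ∏ k, Q (s k) (i k) (j' k)
        = ∏ k, ((starRingEnd ℂ) (Q (s k) (i k) (j k)) * Q (s k) (i k) (j' k)) := by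
    intro i
    rw [← starRingEnd_apply, map_prod, Finset.prod_mul_distrib]
  simp only [h]
  rw [← Fintype.prod_sum
    (fun k i => (starRingEnd ℂ) (Q (s k) i (j k)) * Q (s k) i (j' k))]
  simp only [Q_unitary, Matrix.one_apply]
  rw [Finset.prod_ite_zero]
  simp [funext_iff]

lemma P_norm {n : ℕ} (s : Fin n → Fin 4) (ψ : (Fin n → Fin 2) → ℂ)
    (hψ : star ψ ⬝ᵥ ψ = 1) :
    ∑ b, (P s).mulVec ψ b * (starRingEnd ℂ) ((P s).mulVec ψ b) = 1 := by
  have h : star ((P s).mulVec ψ) ⬝ᵥ (P s).mulVec ψ = 1 := by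
    rw [Matrix.star_mulVec, ← Matrix.dotProduct_mulVec, Matrix.mulVec_mulVec, P_unitary,
      Matrix.one_mulVec, hψ]
  rw [← h]
  exact Finset.sum_congr rfl fun b _ => mul_comm _ _

theorem trace_out_one_copy (n α' : ℕ) (hα' : 1 ≤ α') (ψ : (Fin n → Fin 2) → ℂ)
    (hψ : star ψ ⬝ᵥ ψ = 1) :
    (Matrix.of fun g g' : Fin α' → Fin n → Fin 2 =>
        ∑ b : Fin n → Fin 2,
          rho n (α' + 1) ψ (Fin.cons b g) (Fin.cons b g'))
      = rho n α' ψ := by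
  ext g g'
  simp only [rho, Matrix.of_apply, Fin.prod_univ_succ, Fin.cons_zero, Fin.cons_succ]
  rw [← Finset.mul_sum, Finset.sum_comm]
  congr 1
  refine Finset.sum_congr rfl fun s _ => ?_
  rw [← Finset.sum_mul, P_norm s ψ hψ, one_mul]
end

section
/- The ancilla marginal of the purified state has entries given by powers of Pauli overlaps: for every natural number n, every integer α ≥ 1, every unit vector ψ : (Fin n → Fin 2) → ℂ, and all i, j : Fin n → Fin 4, Σ over all f : Fin α → Fin n → Fin 2 of ψ'_α (i, f) · conj(ψ'_α (j, f)) = d⁻² · (⟨ψ, (P_j * P_i) ψ⟩)^α, where ⟨ψ, M ψ⟩ = star ψ ⬝ᵥ M.mulVec ψ and d = 2^n. -/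
open Complex Matrix BigOperators

/-- The purified state `ψ′_α = d⁻¹ ∑_t |t⟩ ⊗ (P_t ψ)^⊗α`. -/
noncomputable def psi' (n α : ℕ) (ψ : (Fin n → Fin 2) → ℂ) :
    (Fin n → Fin 4) × (Fin α → Fin n → Fin 2) → ℂ :=
  fun p => (2 ^ n : ℂ)⁻¹ * ∏ m, (P p.1).mulVec ψ (p.2 m)

theorem Q_herm (a : Fin 4) : (Q a)ᴴ = Q a := by
  fin_cases a <;> ext x y <;> fin_cases x <;> fin_cases y <;>
    simp [Q, Matrix.conjTranspose_apply]

theorem P_herm {n : ℕ} (s : Fin n → Fin 4) : (P s)ᴴ = P s := by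
  ext x y
  simp only [P, Matrix.conjTranspose_apply, Matrix.of_apply, star_prod]
  refine Finset.prod_congr rfl fun k _ => ?_
  rw [← Matrix.conjTranspose_apply, Q_herm]

theorem overlap_eq {n : ℕ} (ψ : (Fin n → Fin 2) → ℂ) (i j : Fin n → Fin 4) :
    star ψ ⬝ᵥ (P j * P i).mulVec ψ
      = ∑ x, (P i).mulVec ψ x * (starRingEnd ℂ) ((P j).mulVec ψ x) := by
  rw [← Matrix.mulVec_mulVec, Matrix.dotProduct_mulVec]
  have h : star ψ ᵥ* P j = star ((P j).mulVec ψ) := by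
    rw [Matrix.star_mulVec, P_herm]
  rw [h]
  simp only [dotProduct, Pi.star_apply, starRingEnd_apply]
  exact Finset.sum_congr rfl fun x _ => mul_comm _ _

theorem ancilla_marginal_entries (n α : ℕ) (hα : 1 ≤ α) (ψ : (Fin n → Fin 2) → ℂ)
    (hψ : star ψ ⬝ᵥ ψ = 1) (i j : Fin n → Fin 4) :
    ∑ f : Fin α → Fin n → Fin 2, psi' n α ψ (i, f) * (starRingEnd ℂ) (psi' n α ψ (j, f))
      = ((2 ^ n : ℂ) ^ 2)⁻¹ * (star ψ ⬝ᵥ (P j * P i).mulVec ψ) ^ α := by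
  have key : (∑ x, (P i).mulVec ψ x * (starRingEnd ℂ) ((P j).mulVec ψ x)) ^ α
      = ∑ f : Fin α → Fin n → Fin 2,
        ∏ m, ((P i).mulVec ψ (f m) * (starRingEnd ℂ) ((P j).mulVec ψ (f m))) := by
    have h := Fintype.prod_sum (fun (_ : Fin α) (x : Fin n → Fin 2) =>
      (P i).mulVec ψ x * (starRingEnd ℂ) ((P j).mulVec ψ x))
    rw [Finset.prod_const, Finset.card_univ, Fintype.card_fin] at h
    exact h
  rw [overlap_eq, key, Finset.mul_sum]
  refine Finset.sum_congr rfl fun f _ => ?_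
  simp only [psi', map_mul, map_prod, map_inv₀, map_pow, map_ofNat, Finset.prod_mul_distrib]
  ring
end
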